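/- Let m ≥ 1 and let a_1, …, a_{2m} be positive integers. Then the regular continued fraction [a_1, …, a_{2m}] equals, as a rational number, the negative continued fraction ⟦a_1+1, 2^{(a_2−1)}, a_3+2, 2^{(a_4−1)}, a_5+2, …, a_{2m−1}+2, 2^{(a_{2m}−1)}⟧; the latter is well defined since all of its entries are ≥ 2. -/

import Mathlib

/-- The regular continued fraction `[a₁, …, a_m] = a₁ + 1/(a₂ + 1/(⋯ + 1/a_m))`. -/
def rcf : List ℤ → ℚ
  | [] => 0
  | [a] => (a : ℚ)
  | a :: b :: l => (a : ℚ) + (rcf (b :: l))⁻¹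

/-- The negative continued fraction `⟦c₁, …, c_k⟧ = c₁ − 1/(c₂ − 1/(⋯ − 1/c_k))`. -/
def ncf : List ℤ → ℚ
  | [] => 0
  | [c] => (c : ℚ)
  | c :: d :: l => (c : ℚ) - (ncf (d :: l))⁻¹

/-- Auxiliary: converts `(a₁, a₂, a₃, …)` to `(a₁+2, 2^(a₂−1), a₃+2, 2^(a₄−1), …)`. -/
def hzTail : List ℤ → List ℤ
  | [] => []
  | [a] => [a + 2]
  | a :: b :: l => (a + 2) :: (List.replicate (b - 1).toNat 2 ++ hzTail l)

/-- The Hirzebruch conversion: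
`(a₁, a₂, a₃, a₄, …) ↦ (a₁+1, 2^(a₂−1), a₃+2, 2^(a₄−1), …)`. -/
def hz : List ℤ → List ℤ
  | [] => []
  | [a] => [a + 1]
  | a :: b :: l => (a + 1) :: (List.replicate (b - 1).toNat 2 ++ hzTail l)

theorem rcf_cons (a : ℤ) (l : List ℤ) : rcf (a :: l) = (a : ℚ) + (rcf l)⁻¹ := by
  cases l <;> simp [rcf]

theorem ncf_cons (a : ℤ) (l : List ℤ) : ncf (a :: l) = (a : ℚ) - (ncf l)⁻¹ := by
  cases l <;> simp [ncf]

theorem rcf_nonneg (l : List ℤ) (h : ∀ x ∈ l, 1 ≤ x) : 0 ≤ rcf l := by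
  induction l with
  | nil => simp [rcf]
  | cons a l ih =>
    rw [rcf_cons]
    have h1 : (1 : ℚ) ≤ a := by exact_mod_cast h a (by simp)
    have h2 := inv_nonneg.2 (ih fun x hx => h x (by simp [hx]))
    linarith

theorem ncf_replicate (T : List ℤ) (s : ℚ) (hs : 0 ≤ s)
    (hT : (ncf T)⁻¹ = 1 - (1 + s)⁻¹) (n : ℕ) :
    (ncf (List.replicate n 2 ++ T))⁻¹ = 1 - (n + 1 + s)⁻¹ := by
  induction n with
  | zero => simpa using hT
  | succ n ih =>
    rw [List.replicate_succ, List.cons_append, ncf_cons, ih]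
    have hn : (0 : ℚ) ≤ n := n.cast_nonneg
    have h1 : (n : ℚ) + 1 + s ≠ 0 := by positivity
    have h2 : (n : ℚ) + 1 + 1 + s ≠ 0 := by positivity
    have h3 : ((2 : ℤ) : ℚ) - (1 - ((n : ℚ) + 1 + s)⁻¹)
        = ((n : ℚ) + 1 + 1 + s) / (n + 1 + s) := by
      push_cast
      field_simp
      ring
    rw [h3]
    push_cast
    field_simp
    ring

/-- One block of the conversion, given the value on the remaining list. -/
theorem block (b : ℤ) (hb : 1 ≤ b) (l : List ℤ) (h : ∀ x ∈ l, 1 ≤ x)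
    (hT : (ncf (hzTail l))⁻¹ = 1 - (1 + (rcf l)⁻¹)⁻¹) :
    (ncf (List.replicate (b - 1).toNat 2 ++ hzTail l))⁻¹ = 1 - (rcf (b :: l))⁻¹ := by
  rw [ncf_replicate _ _ (inv_nonneg.2 (rcf_nonneg l h)) hT, rcf_cons]
  have h1 : (((b - 1).toNat : ℕ) : ℤ) = b - 1 := Int.toNat_of_nonneg (by omega)
  have h2 : (((b - 1).toNat : ℕ) : ℚ) = b - 1 := by exact_mod_cast h1
  rw [h2]
  ring

theorem tail_value : ∀ (m : ℕ) (l : List ℤ), l.length = 2 * m → (∀ x ∈ l, 1 ≤ x) →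
    (∀ c ∈ hzTail l, 2 ≤ c) ∧ (ncf (hzTail l))⁻¹ = 1 - (1 + (rcf l)⁻¹)⁻¹
  | 0, l, hl, _ => by
    have : l = [] := List.length_eq_zero_iff.1 (by omega)
    subst this
    simp [hzTail, ncf, rcf]
  | m + 1, [], hl, _ => by simp at hl
  | m + 1, [_], hl, _ => by simp at hl; omega
  | m + 1, a :: b :: l, hl, h => by
    have hl' : l.length = 2 * m := by simp at hl; omega
    have hp : ∀ x ∈ l, 1 ≤ x := fun x hx => h x (by simp [hx])
    have ha : 1 ≤ a := h a (by simp)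
    have hb : 1 ≤ b := h b (by simp)
    obtain ⟨i1, i2⟩ := tail_value m l hl' hp
    constructor
    · intro c hc
      simp only [hzTail, List.mem_cons, List.mem_append, List.mem_replicate] at hc
      rcases hc with hc | hc | hc
      · omega
      · omega
      · exact i1 c hc
    · rw [hzTail, ncf_cons, block b hb l hp i2, rcf_cons a]
      have h0 : 0 ≤ (rcf (b :: l))⁻¹ :=
        inv_nonneg.2 (rcf_nonneg _ fun x hx => h x (List.mem_cons_of_mem _ hx))
      have h1 : (1 : ℚ) ≤ a := by exact_mod_cast ha
      generalize (rcf (b :: l))⁻¹ = t at *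
      have e : (((a + 2 : ℤ) : ℚ) - (1 - t)) = (a + t) + 1 := by push_cast; ring
      rw [e]
      have h2 : 0 < (a : ℚ) + t := by linarith
      generalize (a : ℚ) + t = r at *
      have h3 : 1 + r⁻¹ = (r + 1) / r := by field_simp
      rw [h3]
      field_simp
      ring

/-- for positive integers `a₁, …, a_{2m}` (`m ≥ 1`), the regular
continued fraction `[a₁, …, a_{2m}]` equals the negative continued fraction
`⟦a₁+1, 2^(a₂−1), a₃+2, 2^(a₄−1), …, a_{2m−1}+2, 2^(a_{2m}−1)⟧`, all of
whose entries are ≥ 2. -/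
theorem stmt0 (m : ℕ) (hm : 1 ≤ m) (a : List ℤ) (hlen : a.length = 2 * m)
    (ha : ∀ x ∈ a, 1 ≤ x) :
    (∀ c ∈ hz a, 2 ≤ c) ∧ rcf a = ncf (hz a) := by
  match m, a, hm, hlen, ha with
  | m + 1, [], _, hl, _ => simp at hl
  | m + 1, [_], _, hl, _ => simp at hl; omega
  | m + 1, a :: b :: l, _, hl, h =>
    have hl' : l.length = 2 * m := by simp at hl; omega
    have hp : ∀ x ∈ l, 1 ≤ x := fun x hx => h x (by simp [hx])
    have ha : 1 ≤ a := h a (by simp)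
    have hb : 1 ≤ b := h b (by simp)
    obtain ⟨i1, i2⟩ := tail_value m l hl' hp
    constructor
    · intro c hc
      simp only [hz, List.mem_cons, List.mem_append, List.mem_replicate] at hc
      rcases hc with hc | hc | hc
      · omega
      · omega
      · exact i1 c hc
    · rw [hz, ncf_cons, block b hb l hp i2, rcf_cons a]
      push_cast
      ring
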